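/- arXiv:2202.02551 — 3 statements merged into one kernel-verified Lean document; each statement's English description precedes it below -/
import Mathlib

section
/- Let (A,B,C) be the equilateral triangle with A = 1, B = (−1 + √3·I)/2, C = (−1 − √3·I)/2, let M = x + y·I be a point such that three successive applications of the circumcenter map with respect to M are defined, let (A''',B''',C''') be the third iterate, and suppose σ ∈ ℂ satisfies A''' − M = σ*(A − M), B''' − M = σ*(B − M), C''' − M = σ*(C − M). Then the rotation induced by the similarity is trivial or by π (i.e., Im σ = 0) if and only if y·(y² − 3x²) = 0, i.e., if and only if M lies on one of the three lines through the centroid along directions 0, π/3, 2π/3. -/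
open scoped Classical

/-- Circumcenter of three points of `ℂ` (junk value `0` if the points are collinear).
When the points are affinely independent this is the unique point equidistant from all three. -/
noncomputable def ccenter (A B C : ℂ) : ℂ :=
  if h : AffineIndependent ℝ ![A, B, C] then
    (⟨![A, B, C], h⟩ : Affine.Simplex ℝ ℂ 2).circumcenter
  else 0

/-- The circumcenter map on triangles: `(A,B,C)` is sent to
`(circumcenter(M,B,C), circumcenter(M,C,A), circumcenter(M,A,B))`. -/
noncomputable def tmap (M : ℂ) (T : ℂ × ℂ × ℂ) : ℂ × ℂ × ℂ :=
  (ccenter M T.2.1 T.2.2, ccenter M T.2.2 T.1, ccenter M T.1 T.2.1)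

/-- The circumcenter map is defined at `(M, T)`: each of the triples
`(M,B,C)`, `(M,C,A)`, `(M,A,B)` is non-collinear. -/
def TDef (M : ℂ) (T : ℂ × ℂ × ℂ) : Prop :=
  AffineIndependent ℝ ![M, T.2.1, T.2.2] ∧ AffineIndependent ℝ ![M, T.2.2, T.1] ∧
    AffineIndependent ℝ ![M, T.1, T.2.1]

open ComplexConjugate in
lemma cc_basic {M B C : ℂ} (h : AffineIndependent ℝ ![M, B, C]) :
    B - M ≠ 0 ∧ C - M ≠ 0 ∧ B - C ≠ 0 ∧
    (ccenter M B C - M) * conj (B - M) + conj (ccenter M B C - M) * (B - M)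
      = (B - M) * conj (B - M) ∧
    (ccenter M B C - M) * conj (C - M) + conj (ccenter M B C - M) * (C - M)
      = (C - M) * conj (C - M) := by
  have hi := h.injective
  have h1 : B ≠ M := fun e => by
    have := @hi 1 0 (by simpa using e)
    simp at this
  have h2 : C ≠ M := fun e => by
    have := @hi 2 0 (by simpa using e)
    simp at this
  have h3 : B ≠ C := fun e => by
    have := @hi 1 2 (by simpa using e)
    simp at this
  have key : ∀ i, dist (![M, B, C] i) (ccenter M B C) =
      (⟨![M, B, C], h⟩ : Affine.Simplex ℝ ℂ 2).circumradius := by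
    intro i
    rw [ccenter, dif_pos h]
    exact (⟨![M, B, C], h⟩ : Affine.Simplex ℝ ℂ 2).dist_circumcenter_eq_circumradius i
  have k0 := key 0
  have k1 := key 1
  have k2 := key 2
  simp only [Matrix.cons_val] at k0 k1 k2
  have gen : ∀ O X : ℂ, dist X O = dist M O →
      (O - M) * conj (X - M) + conj (O - M) * (X - M) = (X - M) * conj (X - M) := by
    intro O X e
    rw [Complex.dist_eq, Complex.dist_eq] at e
    have e2 : (X - O) * conj (X - O) = (M - O) * conj (M - O) := by
      rw [Complex.mul_conj', Complex.mul_conj', e]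
    simp only [map_sub] at e2 ⊢
    linear_combination -e2
  exact ⟨sub_ne_zero.2 h1, sub_ne_zero.2 h2, sub_ne_zero.2 h3,
    gen _ _ (k1.trans k0.symm), gen _ _ (k2.trans k0.symm)⟩

open ComplexConjugate in
lemma cc_formula {o b c : ℂ} (hb : b ≠ 0) (hc : c ≠ 0) (hbc : b - c ≠ 0)
    (h1 : o * conj b + conj o * b = b * conj b)
    (h2 : o * conj c + conj o * c = c * conj c) :
    ∃ r : ℝ, r ≠ 0 ∧ o = r * (Complex.I * (b * c * conj (b - c))) := by
  have e : o * (conj b * c - b * conj c) = b * c * conj (b - c) := by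
    rw [map_sub]; linear_combination c * h1 - b * h2
  have hD : conj b * c - b * conj c = ((2 * (conj b * c).im : ℝ) : ℂ) * Complex.I := by
    apply Complex.ext <;> simp <;> ring
  set t : ℝ := 2 * (conj b * c).im
  have hne : b * c * conj (b - c) ≠ 0 := by
    refine mul_ne_zero (mul_ne_zero hb hc) ?_
    exact (map_ne_zero _).2 hbc
  rw [hD] at e
  have ht : t ≠ 0 := by
    intro h0
    apply hne
    rw [← e, h0]; simp
  have ht' : (t : ℂ) ≠ 0 := by exact_mod_cast ht
  refine ⟨-t⁻¹, by simpa using ht, ?_⟩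
  rw [← e]
  push_cast
  field_simp
  linear_combination o * Complex.I_sq

open ComplexConjugate in
lemma cc_diff {p q a : ℂ} (ha : a ≠ 0) (hpq : p - q ≠ 0)
    (h1 : p * conj a + conj p * a = a * conj a)
    (h2 : q * conj a + conj q * a = a * conj a) :
    ∃ r : ℝ, r ≠ 0 ∧ conj (p - q) * a = r * Complex.I := by
  have hne : conj (p - q) * a ≠ 0 := mul_ne_zero ((map_ne_zero _).2 hpq) ha
  have e : conj (conj (p - q) * a) = - (conj (p - q) * a) := by
    simp only [map_sub, map_mul, Complex.conj_conj]; linear_combination h1 - h2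
  have hre : (conj (p - q) * a).re = 0 := by
    have := congrArg Complex.re e
    rw [Complex.conj_re, Complex.neg_re] at this
    linarith
  have he : conj (p - q) * a = ((conj (p - q) * a).im : ℝ) * Complex.I := by
    apply Complex.ext
    · rw [hre]; simp
    · simp
  refine ⟨_, ?_, he⟩
  intro h0
  apply hne
  rw [he, h0]; simp

/-- One application of the map: first-order formulas. -/
lemma step1 {M A B C : ℂ} (h : TDef M (A, B, C)) :
    A - M ≠ 0 ∧ ∃ r : ℝ, r ≠ 0 ∧ (tmap M (A, B, C)).1 - M =
      r * (Complex.I * ((B - M) * (C - M) * (starRingEnd ℂ) (B - C))) := by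
  obtain ⟨hb, hc, hbc, e1, e2⟩ := cc_basic h.1
  obtain ⟨-, ha, -, -, -⟩ := cc_basic h.2.1
  refine ⟨ha, ?_⟩
  have := cc_formula hb hc (by simpa using hbc) e1 e2
  simpa [tmap] using this

/-- Two applications. -/
lemma step2 {M A B C : ℂ} (h : TDef M (A, B, C)) (h' : TDef M (tmap M (A, B, C))) :
    ∃ r : ℝ, r ≠ 0 ∧ (tmap M (tmap M (A, B, C))).1 - M =
      r * (((tmap M (A, B, C)).2.1 - M) * ((tmap M (A, B, C)).2.2 - M) / (A - M)) := by
  obtain ⟨ha, -⟩ := step1 h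
  obtain ⟨-, r, hr, e⟩ := step1 (A := (tmap M (A, B, C)).1) (B := (tmap M (A, B, C)).2.1)
    (C := (tmap M (A, B, C)).2.2) h'
  obtain ⟨-, -, hpq, -, -⟩ := cc_basic h'.1
  obtain ⟨-, -, -, -, e1⟩ := cc_basic h.2.1
  obtain ⟨-, -, -, e2, -⟩ := cc_basic h.2.2
  obtain ⟨s, hs, e3⟩ := cc_diff (p := (tmap M (A, B, C)).2.1 - M)
    (q := (tmap M (A, B, C)).2.2 - M) ha (by simpa using hpq) e1 e2
  rw [sub_sub_sub_cancel_right] at e3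
  refine ⟨-(r * s), by simp [hr, hs], ?_⟩
  refine e.trans ?_
  rw [eq_div_of_mul_eq ha e3]
  push_cast
  field_simp
  linear_combination (r * s * ((tmap M (A, B, C)).2.1 - M) * ((tmap M (A, B, C)).2.2 - M)) * Complex.I_sq

lemma TDef.rot {M : ℂ} {T : ℂ × ℂ × ℂ} (h : TDef M T) : TDef M (T.2.1, T.2.2, T.1) :=
  ⟨h.2.1, h.2.2, h.1⟩

/-- For the equilateral triangle, the rotation of the similarity realized by three
applications of the circumcenter map is trivial or by `π` (i.e. `Im σ = 0`) iff
`M = x + y·I` lies on the union of the three lines `y (y² − 3x²) = 0` through the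
centroid along directions `0`, `π/3`, `2π/3`. -/
theorem equilateral_zero_rotation_locus
    (x y : ℝ) (M : ℂ) (hM : M = x + y * Complex.I)
    (A B C : ℂ) (hA : A = 1)
    (hB : B = (-1 + Real.sqrt 3 * Complex.I) / 2)
    (hC : C = (-1 - Real.sqrt 3 * Complex.I) / 2)
    (hdef : ∀ k < 3, TDef M ((tmap M)^[k] (A, B, C)))
    (σ : ℂ)
    (hσA : ((tmap M)^[3] (A, B, C)).1 - M = σ * (A - M))
    (hσB : ((tmap M)^[3] (A, B, C)).2.1 - M = σ * (B - M))
    (hσC : ((tmap M)^[3] (A, B, C)).2.2 - M = σ * (C - M)) :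
    σ.im = 0 ↔ y * (y ^ 2 - 3 * x ^ 2) = 0 := by
  have d0 : TDef M (A, B, C) := hdef 0 (by norm_num)
  have d1 : TDef M (tmap M (A, B, C)) := hdef 1 (by norm_num)
  have d2 : TDef M (tmap M (tmap M (A, B, C))) := hdef 2 (by norm_num)
  replace hσA : (tmap M (tmap M (tmap M (A, B, C)))).1 - M = σ * (A - M) := hσA
  clear hσB hσC hdef
  obtain ⟨ha, r1, hr1, f1⟩ := step1 d0
  obtain ⟨hb, r2, hr2, f2⟩ := step1 d0.rot
  obtain ⟨hc, r3, hr3, f3⟩ := step1 d0.rot.rot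
  obtain ⟨s2, hs2, g2⟩ := step2 d0.rot d1.rot
  obtain ⟨s3, hs3, g3⟩ := step2 d0.rot.rot d1.rot.rot
  obtain ⟨u, hu, k⟩ := step2 (A := (tmap M (A, B, C)).1) d1 d2
  replace k : (tmap M (tmap M (tmap M (A, B, C)))).1 - M =
      u * (((tmap M (tmap M (A, B, C))).2.1 - M) * ((tmap M (tmap M (A, B, C))).2.2 - M) /
        ((tmap M (A, B, C)).1 - M)) := k
  obtain ⟨ha', -⟩ := step1 (A := (tmap M (A, B, C)).1) d1
  rw [hσA] at k
  replace g2 : (tmap M (tmap M (A, B, C))).2.1 - M =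
      s2 * (((tmap M (A, B, C)).2.2 - M) * ((tmap M (A, B, C)).1 - M) / (B - M)) := g2
  replace g3 : (tmap M (tmap M (A, B, C))).2.2 - M =
      s3 * (((tmap M (A, B, C)).1 - M) * ((tmap M (A, B, C)).2.1 - M) / (C - M)) := g3
  replace f2 : (tmap M (A, B, C)).2.1 - M =
      r2 * (Complex.I * ((C - M) * (A - M) * (starRingEnd ℂ) (C - A))) := f2
  replace f3 : (tmap M (A, B, C)).2.2 - M =
      r3 * (Complex.I * ((A - M) * (B - M) * (starRingEnd ℂ) (A - B))) := f3
  rw [g2, g3] at k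
  generalize (tmap M (A, B, C)).1 - M = a' at *
  generalize (tmap M (A, B, C)).2.1 - M = b' at *
  generalize (tmap M (A, B, C)).2.2 - M = c' at *
  have k2 : σ * (A - M) = u * s2 * s3 * (a' * b' * c' / ((B - M) * (C - M))) := by
    rw [k]; field_simp
  dsimp only at ha hb hc f1
  have hs3' : ((Real.sqrt 3 : ℝ) : ℂ) ^ 2 = 3 := by
    rw [← Complex.ofReal_pow, Real.sq_sqrt (by norm_num)]; norm_num
  have hP : (starRingEnd ℂ) (B - C) * (starRingEnd ℂ) (C - A) * (starRingEnd ℂ) (A - B)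
      = 3 * Real.sqrt 3 * Complex.I := by
    subst hA hB hC
    simp only [map_sub, map_div₀, map_add, map_mul, map_neg, map_one, Complex.conj_ofReal,
      Complex.conj_I, map_ofNat]
    generalize ((Real.sqrt 3 : ℝ) : ℂ) = s at *
    have hI := Complex.I_sq
    linear_combination (s * Complex.I) * (s^2 / 4) * (-hI) + (s * Complex.I) / 4 * hs3'
  have hQ : (A - M) * (B - M) * (C - M) = 1 - M ^ 3 := by
    subst hA hB hC
    generalize ((Real.sqrt 3 : ℝ) : ℂ) = s at *
    have hI := Complex.I_sq
    linear_combination (1 - M) * (-(s^2/4)) * hI + (1 - M) / 4 * hs3'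
  have k3 : σ = ((u * s2 * s3 * r1 * r2 * r3 * (3 * Real.sqrt 3) : ℝ) : ℂ) * (1 - M ^ 3) := by
    apply mul_right_cancel₀ ha
    rw [k2, f1, f2, f3, ← hQ]
    push_cast
    have e : u * s2 * s3 * (r1 * (Complex.I * ((B - M) * (C - M) * (starRingEnd ℂ) (B - C))) *
        (r2 * (Complex.I * ((C - M) * (A - M) * (starRingEnd ℂ) (C - A)))) *
        (r3 * (Complex.I * ((A - M) * (B - M) * (starRingEnd ℂ) (A - B)))) /
        ((B - M) * (C - M))) = u * s2 * s3 * r1 * r2 * r3 * ((A - M) * (B - M) * (C - M)) * (A - M)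
        * (Complex.I ^ 3 * ((starRingEnd ℂ) (B - C) * (starRingEnd ℂ) (C - A) * (starRingEnd ℂ) (A - B))) := by
      generalize (starRingEnd ℂ) (B - C) = p
      generalize (starRingEnd ℂ) (C - A) = q
      generalize (starRingEnd ℂ) (A - B) = w
      field_simp
    have hI : Complex.I ^ 4 = 1 := Complex.I_pow_four
    rw [e, hP]
    linear_combination (u * s2 * s3 * r1 * r2 * r3 * ((A - M) * (B - M) * (C - M)) * (A - M) * (3 * ((Real.sqrt 3 : ℝ) : ℂ))) * hI
  have hne : u * s2 * s3 * r1 * r2 * r3 * (3 * Real.sqrt 3) ≠ 0 := by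
    have : Real.sqrt 3 ≠ 0 := by positivity
    positivity
  rw [k3, Complex.im_ofReal_mul, mul_eq_zero, or_iff_right hne]
  have him : (1 - M ^ 3).im = y * (y ^ 2 - 3 * x ^ 2) := by
    rw [hM]
    simp [pow_succ]
    ring
  rw [him]
end

section
/- Let (A,B,C) be the equilateral triangle with A = 1, B = (−1 + √3·I)/2, C = (−1 − √3·I)/2, and let ω = exp(2πI/3). For each M in the six-element set {1+√3, 1−√3, ω·(1+√3), ω²·(1+√3), ω·(1−√3), ω²·(1−√3)}, three successive applications of the circumcenter map with respect to M are defined (all triples encountered are non-collinear) and the third iterate equals (A,B,C) vertexwise; that is, the circumcenter map is 3-periodic at these six points. -/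
open scoped Classical

/-- Three-periodicity with definedness. -/
def Per (M : ℂ) (T : ℂ × ℂ × ℂ) : Prop :=
  (∀ k < 3, TDef M ((tmap M)^[k] T)) ∧ (tmap M)^[3] T = T

/-- `O` is the circumcenter of the nondegenerate triangle `P Q R`, in coordinates. -/
def IsCC (P Q R O : ℂ) : Prop :=
  (Q.re - P.re) * (R.im - P.im) - (Q.im - P.im) * (R.re - P.re) ≠ 0 ∧
  (Q.re - O.re) ^ 2 + (Q.im - O.im) ^ 2 = (P.re - O.re) ^ 2 + (P.im - O.im) ^ 2 ∧
  (R.re - O.re) ^ 2 + (R.im - O.im) ^ 2 = (P.re - O.re) ^ 2 + (P.im - O.im) ^ 2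

def Step (M : ℂ) (T T' : ℂ × ℂ × ℂ) : Prop :=
  IsCC M T.2.1 T.2.2 T'.1 ∧ IsCC M T.2.2 T.1 T'.2.1 ∧ IsCC M T.1 T.2.1 T'.2.2

lemma IsCC.aff {P Q R O : ℂ} (h : IsCC P Q R O) : AffineIndependent ℝ ![P, Q, R] := by
  have h1 := h.1
  rw [affineIndependent_iff_linearIndependent_vsub ℝ _ (0 : Fin 3),
    ← linearIndependent_equiv (finSuccAboveEquiv (0 : Fin 3))]
  have hf : ((fun i : {x : Fin 3 // x ≠ 0} => ![P, Q, R] i -ᵥ ![P, Q, R] 0) ∘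
      (finSuccAboveEquiv (0 : Fin 3))) = ![Q - P, R - P] := by
    funext i
    fin_cases i <;> rfl
  rw [hf, LinearIndependent.pair_iff]
  intro s t hst
  have hre := congrArg Complex.re hst
  have him := congrArg Complex.im hst
  simp at hre him
  constructor
  · have : s * ((Q.re - P.re) * (R.im - P.im) - (Q.im - P.im) * (R.re - P.re)) = 0 := by
      linear_combination (R.im - P.im) * hre - (R.re - P.re) * him
    exact (mul_eq_zero.mp this).resolve_right h1
  · have : t * ((Q.re - P.re) * (R.im - P.im) - (Q.im - P.im) * (R.re - P.re)) = 0 := by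
      linear_combination (Q.re - P.re) * him - (Q.im - P.im) * hre
    exact (mul_eq_zero.mp this).resolve_right h1

lemma IsCC.eq {P Q R O : ℂ} (h : IsCC P Q R O) : ccenter P Q R = O := by
  have ha := h.aff
  have hd : ∀ z : ℂ, dist z O = √((z.re - O.re) ^ 2 + (z.im - O.im) ^ 2) := by
    intro z; rw [Complex.dist_eq_re_im]
  obtain ⟨h1, h2, h3⟩ := h
  rw [ccenter, dif_pos ha]
  symm
  refine Affine.Simplex.eq_circumcenter_of_dist_eq (r := dist P O) _ ?_ ?_
  · have : affineSpan ℝ (Set.range ![P, Q, R]) = ⊤ := by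
      rw [ha.affineSpan_eq_top_iff_card_eq_finrank_add_one]
      simp [Complex.finrank_real_complex]
    simp only [this]
    trivial
  · intro i
    fin_cases i
    · rfl
    · change dist Q O = dist P O
      rw [hd, hd, h2]
    · change dist R O = dist P O
      rw [hd, hd, h3]

lemma Step.tdef {M : ℂ} {T T' : ℂ × ℂ × ℂ} (h : Step M T T') : TDef M T :=
  ⟨h.1.aff, h.2.1.aff, h.2.2.aff⟩

lemma Step.eq {M : ℂ} {T T' : ℂ × ℂ × ℂ} (h : Step M T T') : tmap M T = T' := by
  rw [tmap, h.1.eq, h.2.1.eq, h.2.2.eq]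

lemma per_of_step (M : ℂ) (T T1 T2 : ℂ × ℂ × ℂ) (h0 : Step M T T1) (h1 : Step M T1 T2)
    (h2 : Step M T2 T) : Per M T := by
  constructor
  · intro k hk
    interval_cases k
    · exact h0.tdef
    · simpa [h0.eq] using h1.tdef
    · simpa [h0.eq, h1.eq] using h2.tdef
  · simp [h0.eq, h1.eq, h2.eq]

lemma case0 (r e : ℝ) (hr : r ^ 2 = 3) (he : e ^ 2 = 1) :
    Per ⟨1 + 1 * r, e * (0 + 0 * r)⟩
      (⟨1 + 0 * r, e * (0 + 0 * r)⟩, ⟨-1/2 + 0 * r, e * (0 + 1/2 * r)⟩, ⟨-1/2 + 0 * r, e * (0 - 1/2 * r)⟩) := by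
  apply per_of_step _ _
    (⟨1 + 0 * r, e * (0 + 0 * r)⟩, ⟨1 + 1/2 * r, e * (-3/2 - 1 * r)⟩, ⟨1 + 1/2 * r, e * (3/2 + 1 * r)⟩)
    (⟨-2 - 1 * r, e * (0 + 0 * r)⟩, ⟨1 + 1/2 * r, e * (3/2 + 0 * r)⟩, ⟨1 + 1/2 * r, e * (-3/2 + 0 * r)⟩)
  all_goals
    refine ⟨⟨?_, ?_, ?_⟩, ⟨?_, ?_, ?_⟩, ⟨?_, ?_, ?_⟩⟩ <;> dsimp only <;> grind

lemma case1 (r e : ℝ) (hr : r ^ 2 = 3) (he : e ^ 2 = 1) :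
    Per ⟨-1/2 - 1/2 * r, e * (3/2 + 1/2 * r)⟩
      (⟨1 + 0 * r, e * (0 + 0 * r)⟩, ⟨-1/2 + 0 * r, e * (0 + 1/2 * r)⟩, ⟨-1/2 + 0 * r, e * (0 - 1/2 * r)⟩) := by
  apply per_of_step _ _
    (⟨-2 - 1 * r, e * (0 + 0 * r)⟩, ⟨-1/2 + 0 * r, e * (0 + 1/2 * r)⟩, ⟨1 + 1/2 * r, e * (3/2 + 1 * r)⟩)
    (⟨-1/2 + 1/2 * r, e * (3/2 + 1/2 * r)⟩, ⟨1 + 1/2 * r, e * (-3/2 - 1 * r)⟩, ⟨-1/2 - 1 * r, e * (0 + 1/2 * r)⟩)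
  all_goals
    refine ⟨⟨?_, ?_, ?_⟩, ⟨?_, ?_, ?_⟩, ⟨?_, ?_, ?_⟩⟩ <;> dsimp only <;> grind

lemma case2 (r e : ℝ) (hr : r ^ 2 = 3) (he : e ^ 2 = 1) :
    Per ⟨-1/2 - 1/2 * r, e * (-3/2 - 1/2 * r)⟩
      (⟨1 + 0 * r, e * (0 + 0 * r)⟩, ⟨-1/2 + 0 * r, e * (0 + 1/2 * r)⟩, ⟨-1/2 + 0 * r, e * (0 - 1/2 * r)⟩) := by
  apply per_of_step _ _
    (⟨-2 - 1 * r, e * (0 + 0 * r)⟩, ⟨1 + 1/2 * r, e * (-3/2 - 1 * r)⟩, ⟨-1/2 + 0 * r, e * (0 - 1/2 * r)⟩)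
    (⟨-1/2 + 1/2 * r, e * (-3/2 - 1/2 * r)⟩, ⟨-1/2 - 1 * r, e * (0 - 1/2 * r)⟩, ⟨1 + 1/2 * r, e * (3/2 + 1 * r)⟩)
  all_goals
    refine ⟨⟨?_, ?_, ?_⟩, ⟨?_, ?_, ?_⟩, ⟨?_, ?_, ?_⟩⟩ <;> dsimp only <;> grind

/-- At the six points `ω^j·(1 ± √3)` (`ω = exp(2πI/3)`), the circumcenter map on the
standard equilateral triangle is defined for three successive applications and is
3-periodic. -/
theorem equilateral_three_periodic_points
    (A B C : ℂ) (hA : A = 1)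
    (hB : B = (-1 + Real.sqrt 3 * Complex.I) / 2)
    (hC : C = (-1 - Real.sqrt 3 * Complex.I) / 2)
    (ω : ℂ) (hω : ω = Complex.exp (2 * Real.pi * Complex.I / 3)) :
    ∀ M ∈ ({1 + (Real.sqrt 3 : ℂ), 1 - (Real.sqrt 3 : ℂ),
            ω * (1 + (Real.sqrt 3 : ℂ)), ω ^ 2 * (1 + (Real.sqrt 3 : ℂ)),
            ω * (1 - (Real.sqrt 3 : ℂ)), ω ^ 2 * (1 - (Real.sqrt 3 : ℂ))} : Set ℂ),
      (∀ k < 3, TDef M ((tmap M)^[k] (A, B, C))) ∧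
      (tmap M)^[3] (A, B, C) = (A, B, C) := by
  have hω' : ω = ⟨-1/2, √3/2⟩ := by
    have : ω = Complex.exp ((2 * Real.pi / 3 : ℝ) * Complex.I) := by
      rw [hω]; congr 1; push_cast; ring
    have h3 : 2 * Real.pi / 3 = Real.pi - Real.pi / 3 := by ring
    rw [this]
    apply Complex.ext
    · rw [Complex.exp_ofReal_mul_I_re, h3, Real.cos_pi_sub, Real.cos_pi_div_three]; norm_num
    · rw [Complex.exp_ofReal_mul_I_im, h3, Real.sin_pi_sub, Real.sin_pi_div_three]
  have hs : √3 ^ 2 = (3 : ℝ) := Real.sq_sqrt (by norm_num)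
  have hs' : (-√3) ^ 2 = (3 : ℝ) := by rw [neg_sq, hs]
  have e1 : (1 : ℝ) ^ 2 = 1 := by norm_num
  have e2 : (-1 : ℝ) ^ 2 = 1 := by norm_num
  intro M hM
  change Per M (A, B, C)
  simp only [Set.mem_insert_iff, Set.mem_singleton_iff] at hM
  subst hA hB hC
  rcases hM with rfl | rfl | rfl | rfl | rfl | rfl
  · convert case0 _ _ hs e1 using 1
    all_goals
      simp only [Prod.mk.injEq, hω', Complex.ext_iff, pow_two]
      simp
      try grind
  · convert case0 _ _ hs' e2 using 1
    all_goals
      simp only [Prod.mk.injEq, hω', Complex.ext_iff, pow_two]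
      simp
      try grind
  · convert case1 _ _ hs e1 using 1
    all_goals
      simp only [Prod.mk.injEq, hω', Complex.ext_iff, pow_two]
      simp
      try grind
  · convert case2 _ _ hs e1 using 1
    all_goals
      simp only [Prod.mk.injEq, hω', Complex.ext_iff, pow_two]
      simp
      try grind
  · convert case1 _ _ hs' e2 using 1
    all_goals
      simp only [Prod.mk.injEq, hω', Complex.ext_iff, pow_two]
      simp
      try grind
  · convert case2 _ _ hs' e2 using 1
    all_goals
      simp only [Prod.mk.injEq, hω', Complex.ext_iff, pow_two]
      simp
      try grind
end

section
/- Let P : ZMod 4 → ℂ be the square with vertices P 0 = 1, P 1 = I, P 2 = −1, P 3 = −I, let M = x + y·I be a point such that the iterate 𝒞_M⁴(P) is defined, and suppose σ ∈ ℂ satisfies (𝒞_M⁴(P)) i − M = σ*(P i − M) for all i. Then the rotation induced by the similarity is trivial or by π (i.e., Im σ = 0) if and only if x·y·(x² − y²) = 0, i.e., if and only if M lies on one of the four lines through the center of the square along directions 0, π/4, π/2, 3π/4. -/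
open scoped Classical

/-- The circumcenter map `𝒞_M`: the `i`-th vertex of the image polygon is the
circumcenter of `M`, `P i`, `P (i+1)`. -/
noncomputable def cmap {n : ℕ} (M : ℂ) (P : ZMod n → ℂ) : ZMod n → ℂ :=
  fun i => ccenter M (P i) (P (i + 1))

open ComplexConjugate

theorem aux_D {M a b : ℂ} (h : AffineIndependent ℝ ![M, a, b]) :
    conj (a - M) * (b - M) - (a - M) * conj (b - M) ≠ 0 := by
  have h1 := (affineIndependent_iff_linearIndependent_vsub ℝ _ (0 : Fin 3)).1 h
  have h2 : ∀ s t : ℝ, s • (a - M) + t • (b - M) = 0 → s = 0 ∧ t = 0 := by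
    have h3 := h1.comp (fun j : Fin 2 => (⟨j.succ, Fin.succ_ne_zero j⟩ : {x : Fin 3 // x ≠ 0}))
      (by intro i j hij; simpa using hij)
    intro s t hst
    rw [Fintype.linearIndependent_iff] at h3
    have h4 := h3 ![s, t] (by simpa [Fin.sum_univ_two] using hst)
    exact ⟨h4 0, h4 1⟩
  generalize a - M = u at *
  generalize b - M = v at *
  intro hD
  have him : u.re * v.im - u.im * v.re = 0 := by
    have := congrArg Complex.im hD
    simp at this
    linarith
  have hu := h2 (-(u.re * v.re + u.im * v.im)) (u.re * u.re + u.im * u.im) (by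
    apply Complex.ext
    · simp
      linear_combination (-u.im) * him
    · simp
      linear_combination u.re * him)
  have hre : u.re = 0 := by nlinarith only [hu.2, sq_nonneg u.re, sq_nonneg u.im]
  have him' : u.im = 0 := by nlinarith only [hu.2, sq_nonneg u.re, sq_nonneg u.im]
  have := h2 1 0 (by apply Complex.ext <;> simp [hre, him'])
  exact one_ne_zero this.1

theorem aux_E {z u : ℂ} (h : dist u z = dist 0 z) :
    z * conj u + conj z * u = u * conj u := by
  rw [Complex.dist_eq, Complex.dist_eq] at h
  have h2 : ((‖u - z‖ : ℂ)) ^ 2 = (‖0 - z‖ : ℂ) ^ 2 := by rw [h]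
  rw [← Complex.mul_conj', ← Complex.mul_conj'] at h2
  simp only [map_sub, map_zero] at h2
  linear_combination -h2

theorem aux_cc {M a b : ℂ} (h : AffineIndependent ℝ ![M, a, b]) :
    ((ccenter M a b - M) * conj (a - M) + conj (ccenter M a b - M) * (a - M)
      = (a - M) * conj (a - M)) ∧
    ((ccenter M a b - M) * conj (b - M) + conj (ccenter M a b - M) * (b - M)
      = (b - M) * conj (b - M)) := by
  have e : ccenter M a b = (⟨![M, a, b], h⟩ : Affine.Simplex ℝ ℂ 2).circumcenter := by
    rw [ccenter, dif_pos h]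
  have k0 := (⟨![M, a, b], h⟩ : Affine.Simplex ℝ ℂ 2).dist_circumcenter_eq_circumradius 0
  have k1 := (⟨![M, a, b], h⟩ : Affine.Simplex ℝ ℂ 2).dist_circumcenter_eq_circumradius 1
  have k2 := (⟨![M, a, b], h⟩ : Affine.Simplex ℝ ℂ 2).dist_circumcenter_eq_circumradius 2
  rw [← e] at k0 k1 k2
  rw [← k0] at k1 k2
  constructor <;> apply aux_E
  · simpa [Complex.dist_eq] using k1
  · simpa [Complex.dist_eq] using k2

theorem aux_uniq {z w u v : ℂ} (hD : conj u * v - u * conj v ≠ 0)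
    (h1 : z * conj u + conj z * u = u * conj u) (h2 : z * conj v + conj z * v = v * conj v)
    (h3 : w * conj u + conj w * u = u * conj u) (h4 : w * conj v + conj w * v = v * conj v) :
    z = w := by
  apply mul_right_cancel₀ hD
  linear_combination v * h1 - u * h2 - v * h3 + u * h4

theorem aux_rec {p a b c : ℂ} (hp : p ≠ 0) (hD : conj a * b - a * conj b ≠ 0)
    (ha : a * conj p + conj a * p = p * conj p) (hb : b * conj p + conj b * p = p * conj p)
    (h1 : c * conj a + conj c * a = a * conj a) (h2 : c * conj b + conj c * b = b * conj b) :
    c = a * (b / p) := by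
  have hp' : conj p ≠ 0 := by simpa using hp
  apply aux_uniq hD h1 h2
  · simp only [map_mul, map_div₀]
    field_simp
    linear_combination (a * conj a) * hb
  · simp only [map_mul, map_div₀]
    field_simp
    linear_combination (b * conj b) * ha

/-- For the unit square, the rotation of the similarity realized by four applications
of the circumcenter map is trivial or by `π` (i.e. `Im σ = 0`) iff `M = x + y·I` lies
on the union of the four lines `x·y·(x² − y²) = 0` through the center of the square
along directions `0`, `π/4`, `π/2`, `3π/4`. -/
theorem square_zero_rotation_locus
    (P : ZMod 4 → ℂ)
    (hP0 : P 0 = 1) (hP1 : P 1 = Complex.I) (hP2 : P 2 = -1) (hP3 : P 3 = -Complex.I)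
    (x y : ℝ) (M : ℂ) (hM : M = x + y * Complex.I)
    (hdef : ∀ k < 4, ∀ i : ZMod 4,
      AffineIndependent ℝ ![M, ((cmap M)^[k] P) i, ((cmap M)^[k] P) (i + 1)])
    (σ : ℂ) (hσ : ∀ i : ZMod 4, ((cmap M)^[4] P) i - M = σ * (P i - M)) :
    σ.im = 0 ↔ x * y * (x ^ 2 - y ^ 2) = 0 := by
  have hE : ∀ k < 4, ∀ i : ZMod 4, _ := fun k hk i => aux_cc (hdef k hk i)
  have hD : ∀ k < 4, ∀ i : ZMod 4, _ := fun k hk i => aux_D (hdef k hk i)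
  obtain ⟨Z, hZ⟩ : ∃ Z : ℕ → ZMod 4 → ℂ, ∀ k i, Z k i = ((cmap M)^[k] P) i - M :=
    ⟨_, fun _ _ => rfl⟩
  have hZs : ∀ k i, Z (k+1) i = ccenter M (((cmap M)^[k] P) i) (((cmap M)^[k] P) (i + 1)) - M := by
    intro k i
    rw [hZ, Function.iterate_succ_apply']
    rfl
  simp only [← hZ, ← hZs] at hE hD
  have hne : ∀ k < 4, ∀ i, Z k i ≠ 0 := by
    intro k hk i h0
    apply hD k hk i
    rw [h0]; simp
  have hrec : ∀ k < 3, ∀ i, Z (k+2) i = Z (k+1) i * (Z (k+1) (i+1) / Z k (i+1)) := by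
    intro k hk i
    exact aux_rec (hne k (by omega) _) (hD (k+1) (by omega) i) (hE k (by omega) i).2
      (hE k (by omega) (i+1)).1 (hE (k+1) (by omega) i).1 (hE (k+1) (by omega) i).2
  have hr2 : ∀ k < 3, ∀ i, Z (k+2) i / Z (k+1) i = Z (k+1) (i+1) / Z k (i+1) := by
    intro k hk i
    rw [hrec k hk i, mul_div_cancel_left₀ _ (hne (k+1) (by omega) i)]
  have hs : σ = (Z 1 0 / Z 0 0) * (Z 1 1 / Z 0 1) * (Z 1 2 / Z 0 2) * (Z 1 3 / Z 0 3) := by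
    have e1 := hr2 0 (by omega) 0
    have e2 := hr2 1 (by omega) 0
    have e3 := hr2 2 (by omega) 0
    rw [hr2 1 (by omega)] at e3
    rw [hr2 0 (by omega)] at e2 e3
    norm_num at e1 e2 e3
    have n0 := hne 0 (by omega) 0
    have n1 := hne 1 (by omega) 0
    have n2 := hne 2 (by omega) 0
    have n3 := hne 3 (by omega) 0
    have h4 := hσ 0
    have hz0 := hZ 0 0
    simp only [Function.iterate_zero, id] at hz0
    rw [← hZ, ← hz0] at h4
    have a2 : (1 : ZMod 4) + 1 = 2 := by decide
    have a3 : (2 : ZMod 4) + 1 = 3 := by decide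
    try simp only [a2, a3] at e2 e3
    rw [← e1, ← e2, ← e3]
    field_simp
    exact h4.symm
  have hr : ∀ i : ZMod 4, Z 1 i / Z 0 i * (conj (Z 0 i) * Z 0 (i+1) - Z 0 i * conj (Z 0 (i+1)))
      = Z 0 (i+1) * (conj (Z 0 i) - conj (Z 0 (i+1))) := by
    intro i
    have n0 := hne 0 (by omega) i
    obtain ⟨h1, h2⟩ := hE 0 (by omega) i
    simp only [zero_add] at h1 h2
    field_simp
    linear_combination Z 0 (i+1) * h1 - Z 0 i * h2
  have hDr : ∀ i : ZMod 4, ∃ d : ℝ, d ≠ 0 ∧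
      conj (Z 0 i) * Z 0 (i+1) - Z 0 i * conj (Z 0 (i+1)) = d * Complex.I := by
    intro i
    have h0 := hD 0 (by omega) i
    refine ⟨(conj (Z 0 i) * Z 0 (i+1) - Z 0 i * conj (Z 0 (i+1))).im, ?_, ?_⟩
    · intro h
      apply h0
      apply Complex.ext
      · simp <;> ring
      · exact h
    · apply Complex.ext
      · simp <;> ring
      · simp
  obtain ⟨d0, n0, e0⟩ := hDr 0
  obtain ⟨d1, n1, e1⟩ := hDr 1
  obtain ⟨d2, n2, e2⟩ := hDr 2
  obtain ⟨d3, n3, e3⟩ := hDr 3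
  have r0 := hr 0
  have r1 := hr 1
  have r2 := hr 2
  have r3 := hr 3
  rw [e0] at r0
  rw [e1] at r1
  rw [e2] at r2
  rw [e3] at r3
  have a1 : (0 : ZMod 4) + 1 = 1 := by decide
  have a2 : (1 : ZMod 4) + 1 = 2 := by decide
  have a3 : (2 : ZMod 4) + 1 = 3 := by decide
  have a4 : (3 : ZMod 4) + 1 = 0 := by decide
  rw [a1] at r0
  rw [a2] at r1
  rw [a3] at r2
  rw [a4] at r3
  have z0 : Z 0 0 = 1 - M := by rw [hZ]; simp [hP0]
  have z1 : Z 0 1 = Complex.I - M := by rw [hZ]; simp [hP1]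
  have z2 : Z 0 2 = -1 - M := by rw [hZ]; simp [hP2]
  have z3 : Z 0 3 = -Complex.I - M := by rw [hZ]; simp [hP3]
  have I2 := Complex.I_mul_I
  have key : σ * ((d0 * d1 * d2 * d3 : ℝ) : ℂ) = 4 * (M ^ 4 - 1) := by
    have l : σ * ((d0 * d1 * d2 * d3 : ℝ) : ℂ) =
        (Z 1 0 / Z 0 0 * (d0 * Complex.I)) * (Z 1 1 / Z 0 1 * (d1 * Complex.I)) *
        (Z 1 2 / Z 0 2 * (d2 * Complex.I)) * (Z 1 3 / Z 0 3 * (d3 * Complex.I)) := by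
      rw [hs]; push_cast
      have I4 := Complex.I_pow_four
      linear_combination (-(Z 1 0 / Z 0 0) * (Z 1 1 / Z 0 1) * (Z 1 2 / Z 0 2) * (Z 1 3 / Z 0 3)
        * d0 * d1 * d2 * d3) * I4
    rw [l, r0, r1, r2, r3, z0, z1, z2, z3]
    simp only [map_sub, map_neg, map_one, Complex.conj_I]
    have q1 : (1 - conj M - (-Complex.I - conj M)) * (-Complex.I - conj M - (-1 - conj M)) *
      (-1 - conj M - (- -Complex.I - conj M)) * (- -Complex.I - conj M - (1 - conj M)) = 4 := by
      ring_nf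
      simp only [Complex.I_sq, Complex.I_pow_four, Complex.I_pow_three]
      ring
    have q2 : (Complex.I - M) * (-1 - M) * (-Complex.I - M) * (1 - M) = M ^ 4 - 1 := by
      linear_combination (1 - M ^ 2) * I2
    rw [← q1, ← q2]
    ring
  have kim := congrArg Complex.im key
  rw [Complex.im_mul_ofReal] at kim
  have hmi : (4 * (M ^ 4 - 1)).im = 16 * (x * y * (x ^ 2 - y ^ 2)) := by
    subst hM
    simp [pow_succ]
    ring
  rw [hmi] at kim
  have hR : d0 * d1 * d2 * d3 ≠ 0 := by positivity
  constructor
  · intro h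
    rw [h] at kim
    linarith
  · intro h
    rw [h, mul_zero] at kim
    exact (mul_eq_zero.1 kim).resolve_right hR
end
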